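/- For the Baumslag–Solitar presentation ⟨a,b | a²b = ba⟩, there exists an infinite right-reversing sequence starting from b⁻¹ab: in two reversing steps, b⁻¹ab reverses to a·b⁻¹·a·b·a⁻¹, which properly contains b⁻¹ab as a subword, so reversing from b⁻¹ab never terminates with a positive–negative word along at least one reversing sequence. -/

import Mathlib

/-- A congruence on the free monoid of words over `S`: an equivalence relation
compatible with concatenation. -/
def IsCong {S : Type} (r : List S → List S → Prop) : Prop :=
  Equivalence r ∧ ∀ a b c d : List S, r a b → r c d → r (a ++ c) (b ++ d)

/-- `R`-equivalence: the smallest congruence on the free monoid `S*`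
containing the relations `R`. -/
def REquiv {S : Type} (R : List S → List S → Prop) (w w' : List S) : Prop :=
  ∀ r : List S → List S → Prop, IsCong r → (∀ a b, R a b → r a b) → r w w'

/-- The positive word `w` viewed as a signed word. -/
def wpos {S : Type} (w : List S) : List (S ⊕ S) := w.map Sum.inl

/-- The formal inverse `w⁻¹` of a positive word `w`, as a signed word. -/
def wneg {S : Type} (w : List S) : List (S ⊕ S) := (w.map Sum.inr).reverse

/-- One step of right-reversing with respect to `R`: replace a subword `s⁻¹t`
by `v'·v⁻¹` where `s·v' = t·v` is a relation of `R` (in either orientation),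
including the trivial step `s⁻¹s ↷ ε`. -/
def RevStep {S : Type} (R : List S → List S → Prop) (x y : List (S ⊕ S)) : Prop :=
  ∃ (u u' : List (S ⊕ S)) (s t : S) (v v' : List S),
    x = u ++ [Sum.inr s, Sum.inl t] ++ u' ∧
    y = u ++ wpos v' ++ wneg v ++ u' ∧
    (R (s :: v') (t :: v) ∨ R (t :: v) (s :: v') ∨ (s = t ∧ v = [] ∧ v' = []))

/-- Right-reversing: finitely many reversing steps. -/
def Rev {S : Type} (R : List S → List S → Prop) :
    List (S ⊕ S) → List (S ⊕ S) → Prop :=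
  Relation.ReflTransGen (RevStep R)

/-- Completeness of a presentation with respect to right-reversing. -/
def Complete {S : Type} (R : List S → List S → Prop) : Prop :=
  ∀ w w' : List S, REquiv R w w' → Rev R (wneg w ++ wpos w') []


/-- The two generators. -/
inductive L : Type | a | b
open L

/-- The Baumslag–Solitar relation a²b = ba. -/
def R13 : List L → List L → Prop := fun x y => x = [a,a,b] ∧ y = [b,a]

section IterateTransGen

open Relation

variable {α : Type*} {r : α → α → Prop} {g : α → α} {x : α}

theorem transGen_iterate_iterate_succ (hg : ∀ y z, r y z → r (g y) (g z))
    (h : TransGen r x (g x)) (n : ℕ) : TransGen r (g^[n] x) (g^[n + 1] x) := by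
  induction n with
  | zero => exact h
  | succ n ih =>
    rw [Function.iterate_succ_apply' g n, Function.iterate_succ_apply' g (n + 1)]
    exact ih.lift g hg

/- The iterates of `g` only give a chain for `TransGen r`; since `r` and `TransGen r` have the same
accessible points, a chain for `r` exists without splicing the intermediate steps by hand. -/
theorem exists_seq_of_transGen_apply (hg : ∀ y z, r y z → r (g y) (g z))
    (h : TransGen r x (g x)) : ∃ f : ℕ → α, f 0 = x ∧ ∀ n, r (f n) (f (n + 1)) := by
  have not_acc_transGen : ¬Acc (TransGen (Function.swap r)) x :=
    not_acc_iff_exists_descending_chain.2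
      ⟨fun n ↦ g^[n] x, rfl, fun n ↦ (transGen_iterate_iterate_succ hg h n).swap⟩
  have not_acc : ¬Acc (Function.swap r) x := fun hx ↦ not_acc_transGen hx.transGen
  exact not_acc_iff_exists_descending_chain.1 not_acc

end IterateTransGen

namespace RevStep

variable {S : Type} {R : List S → List S → Prop}

theorem of_rel {s t : S} {v v' : List S} (h : R (s :: v') (t :: v)) :
    RevStep R [Sum.inr s, Sum.inl t] (wpos v' ++ wneg v) :=
  ⟨[], [], s, t, v, v', by simp, by simp, Or.inl h⟩

theorem of_rel_symm {s t : S} {v v' : List S} (h : R (t :: v) (s :: v')) :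
    RevStep R [Sum.inr s, Sum.inl t] (wpos v' ++ wneg v) :=
  ⟨[], [], s, t, v, v', by simp, by simp, Or.inr (Or.inl h)⟩

theorem append_append {x y : List (S ⊕ S)} (h : RevStep R x y) (p q : List (S ⊕ S)) :
    RevStep R (p ++ x ++ q) (p ++ y ++ q) := by
  obtain ⟨u, u', s, t, v, v', rfl, rfl, hR⟩ := h
  exact ⟨p ++ u, u' ++ q, s, t, v, v', by simp, by simp, hR⟩

theorem exists_seq_of_transGen_append {x p q : List (S ⊕ S)}
    (h : Relation.TransGen (RevStep R) x (p ++ x ++ q)) :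
    ∃ f : ℕ → List (S ⊕ S), f 0 = x ∧ ∀ n, RevStep R (f n) (f (n + 1)) :=
  exists_seq_of_transGen_apply (g := fun y ↦ p ++ y ++ q)
    (fun _ _ hstep ↦ hstep.append_append p q) h

end RevStep

section BaumslagSolitar

variable {S : Type} {R : List S → List S → Prop} {a b : S}

theorem revStep_bInv_a_b (h : R [a, a, b] [b, a]) :
    RevStep R [Sum.inr b, Sum.inl a, Sum.inl b] [Sum.inl a, Sum.inr b, Sum.inr a, Sum.inl b] :=
  (RevStep.of_rel_symm h).append_append [] [Sum.inl b]

theorem revStep_a_bInv_aInv_b (h : R [a, a, b] [b, a]) :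
    RevStep R [Sum.inl a, Sum.inr b, Sum.inr a, Sum.inl b]
      [Sum.inl a, Sum.inr b, Sum.inl a, Sum.inl b, Sum.inr a] :=
  (RevStep.of_rel h).append_append [Sum.inl a, Sum.inr b] []

end BaumslagSolitar

/-- For ⟨a,b | a²b = ba⟩, in two right-reversing steps the word b⁻¹ab reverses
to a·b⁻¹·a·b·a⁻¹, which properly contains b⁻¹ab as a subword; consequently
there is an infinite right-reversing sequence starting from b⁻¹ab. -/
theorem stmt13 :
    (∃ w1 : List (L ⊕ L),
      RevStep R13 [Sum.inr b, Sum.inl a, Sum.inl b] w1 ∧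
      RevStep R13 w1 [Sum.inl a, Sum.inr b, Sum.inl a, Sum.inl b, Sum.inr a]) ∧
    (∃ u u' : List (L ⊕ L),
      [Sum.inl a, Sum.inr b, Sum.inl a, Sum.inl b, Sum.inr a] =
        u ++ [Sum.inr b, Sum.inl a, Sum.inl b] ++ u' ∧ (u ≠ [] ∨ u' ≠ [])) ∧
    (∃ f : ℕ → List (L ⊕ L), f 0 = [Sum.inr b, Sum.inl a, Sum.inl b] ∧
      ∀ n : ℕ, RevStep R13 (f n) (f (n + 1))) := by
  have relation : R13 [a, a, b] [b, a] := ⟨rfl, rfl⟩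
  have first_step := revStep_bInv_a_b relation
  have second_step := revStep_a_bInv_aInv_b relation
  refine ⟨⟨_, first_step, second_step⟩,
    ⟨[Sum.inl a], [Sum.inr a], rfl, Or.inl (List.cons_ne_nil _ _)⟩, ?_⟩
  exact RevStep.exists_seq_of_transGen_append (p := [Sum.inl a]) (q := [Sum.inr a])
    (.tail (.single first_step) second_step)
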